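/- arXiv:2009.07248 — 6 statements merged into one kernel-verified Lean document; each statement's English description precedes it below -/
import Mathlib

section
/- Let S* be a feasible chain maximizing Φ among all feasible chains. For i ∈ S*_T let t_i be the unique t with i ∈ S*_t∖S*_{t−1}, and set t_i = T+1 for i ∉ S*_T (with p_{i,T+1} = 0). Let π : N → {1,…,n} be any bijection such that t_i < t_j implies π(i) < π(j). Then φ_π(i) = p_{i,t_i} for every item i ∈ N; consequently Ψ(π) = Φ(S*) and, for every subset G ⊆ N, Φ(S*|_G) = Σ_{i∈G} φ_π(i). -/
/-!
The order `π` serves the items of the optimal chain `S` period by period, so an item inserted at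
time `tᵢ` completes no later than the weight of `S_{tᵢ}`, which fits `W_{tᵢ}`. Hence
`p i tᵢ ≤ φ_π(i)` for each item (`le_itemProfit_insTime`).

Conversely, let each item choose a period `u i` that realizes `φ_π(i)`. The sets
`{i | u i ≤ t}` form a feasible chain: the item of such a set that comes last in `π` completes by
capacity `W_t`, and every other item of the set precedes it (`feasibleChain_of_completion`). Its
profit is `∑ i, φ_π(i)`, which by optimality of `S` is at most `Φ(S) = ∑ i, p i tᵢ`. The
termwise inequalities therefore all hold with equality, and both profit identities follow from
the formula for the profit of a chain in terms of insertion times (`chainProfit_eq_sum`).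
-/

open Finset

noncomputable section
open scoped Classical

namespace GIK

variable {n : ℕ}

/-- Profit `Φ` of a chain `S : ℕ → Finset (Fin n)` (convention `S 0 = ∅`). -/
def chainProfit (T : ℕ) (p : Fin n → ℕ → ℝ) (S : ℕ → Finset (Fin n)) : ℝ :=
  ∑ t ∈ Finset.Icc 1 T, ∑ i ∈ S t \ S (t - 1), p i t

/-- `S` is a chain: `S 0 = ∅` and the sets are nested along `0,…,T`. -/
def IsChainGIK (T : ℕ) (S : ℕ → Finset (Fin n)) : Prop :=
  S 0 = ∅ ∧ ∀ t < T, S t ⊆ S (t + 1)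

/-- Feasible chain: a chain whose total weight fits each period's capacity. -/
def FeasibleChain (T : ℕ) (w : Fin n → ℝ) (W : ℕ → ℝ) (S : ℕ → Finset (Fin n)) : Prop :=
  IsChainGIK T S ∧ ∀ t ∈ Finset.Icc 1 T, ∑ i ∈ S t, w i ≤ W t

/-- `π` is a bijection from `Q` onto `{1, …, |Q|}`. -/
def IsPerm (Q : Finset (Fin n)) (π : Fin n → ℕ) : Prop :=
  Set.BijOn π ↑Q ↑(Finset.Icc 1 Q.card)

/-- Completion time `C_π(i)` of item `i` in a permutation `π` of `Q`. -/
def comp (w : Fin n → ℝ) (Q : Finset (Fin n)) (π : Fin n → ℕ) (i : Fin n) : ℝ :=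
  ∑ j ∈ Q.filter (fun j => π j ≤ π i), w j

/-- Profit `φ_π(i)` of item `i` under a permutation `π` of `Q`:
the best profit `p i t` over periods `t ∈ {1,…,T}` whose capacity is at least `C_π(i)`,
where the fictitious period `T+1` (infinite capacity, zero profit) is accounted for
by inserting `0` into the maximum. -/
def itemProfit (T : ℕ) (w : Fin n → ℝ) (W : ℕ → ℝ) (p : Fin n → ℕ → ℝ)
    (Q : Finset (Fin n)) (π : Fin n → ℕ) (i : Fin n) : ℝ :=
  (insert (0 : ℝ)
      (((Finset.Icc 1 T).filter (fun t => comp w Q π i ≤ W t)).image (fun t => p i t))).max'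
    (Finset.insert_nonempty _ _)

/-- Total profit `Ψ(π)` of a permutation `π` of `Q`. -/
def permProfit (T : ℕ) (w : Fin n → ℝ) (W : ℕ → ℝ) (p : Fin n → ℕ → ℝ)
    (Q : Finset (Fin n)) (π : Fin n → ℕ) : ℝ :=
  ∑ i ∈ Q, itemProfit T w W p Q π i

/-- Insertion time of item `i` in a chain `S` (equal to `T+1` if `i` is never inserted). -/
def insTime (T : ℕ) (S : ℕ → Finset (Fin n)) (i : Fin n) : ℕ :=
  if h : ((Finset.Icc 1 T).filter (fun t => i ∈ S t)).Nonempty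
  then ((Finset.Icc 1 T).filter (fun t => i ∈ S t)).min' h
  else T + 1

/-- `K = ⌈log_{1+ε} (Σ_i w_i)⌉`. -/
def Kof (w : Fin n → ℝ) (ε : ℝ) : ℕ := ⌈Real.logb (1 + ε) (∑ i, w i)⌉₊

/-- Membership of `x` in the interval `I_k` (`I_0 = [0,1]`, `I_k = ((1+ε)^{k-1}, (1+ε)^k]`). -/
def inInterval (ε : ℝ) (k : ℕ) (x : ℝ) : Prop :=
  if k = 0 then x ∈ Set.Icc (0 : ℝ) 1
  else x ∈ Set.Ioc ((1 + ε) ^ (k - 1)) ((1 + ε) ^ k)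

/-- Item `i` is `k`-heavy: `w i ≥ ε² (1+ε)^k`. -/
def Heavy (w : Fin n → ℝ) (ε : ℝ) (k : ℕ) (i : Fin n) : Prop :=
  ε ^ 2 * (1 + ε) ^ k ≤ w i

/-- `Ψ_heavy(π)` for a permutation `π` of all items. -/
def psiHeavy (T : ℕ) (w : Fin n → ℝ) (W : ℕ → ℝ) (p : Fin n → ℕ → ℝ) (ε : ℝ)
    (π : Fin n → ℕ) : ℝ :=
  ∑ k ∈ Finset.range (Kof w ε + 1),
    ∑ i ∈ Finset.univ.filter
        (fun i : Fin n => Heavy w ε k i ∧ inInterval ε k (comp w Finset.univ π i)),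
      itemProfit T w W p Finset.univ π i

/-- `Ψ_light(π)` for a permutation `π` of all items. -/
def psiLight (T : ℕ) (w : Fin n → ℝ) (W : ℕ → ℝ) (p : Fin n → ℕ → ℝ) (ε : ℝ)
    (π : Fin n → ℕ) : ℝ :=
  ∑ k ∈ Finset.range (Kof w ε + 1),
    ∑ i ∈ Finset.univ.filter
        (fun i : Fin n => ¬ Heavy w ε k i ∧ inInterval ε k (comp w Finset.univ π i)),
      itemProfit T w W p Finset.univ π i

/-- A pair `(S, π)` is bulky: `π` is a bijection `S → {1,…,|S|}` and every item whose
completion time lies in `I_k` is `k`-heavy. -/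
def Bulky (w : Fin n → ℝ) (ε : ℝ) (S : Finset (Fin n)) (π : Fin n → ℕ) : Prop :=
  IsPerm S π ∧
    ∀ k ∈ Finset.range (Kof w ε + 1), ∀ i ∈ S,
      inInterval ε k (comp w S π i) → Heavy w ε k i

/-- Capacity of bucket `B_k`. -/
def bucketCap (ε : ℝ) (k : ℕ) : ℝ := (1 + ε) ^ k - (1 + ε) ^ (k - 1)

/-- Assignment profit `q_{i,k}`. -/
def qProfit (T : ℕ) (W : ℕ → ℝ) (p : Fin n → ℕ → ℝ) (ε : ℝ) (i : Fin n) (k : ℕ) : ℝ :=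
  (insert (0 : ℝ)
      (((Finset.Icc 1 T).filter (fun t => (1 + ε) ^ k ≤ W t)).image (fun t => p i t))).max'
    (Finset.insert_nonempty _ _)

/-- LP feasibility of an assignment vector `x` (indices `k ∈ {1,…,K-1}`, `i ∈ L_{k+1}`). -/
def LPfeasible (w : Fin n → ℝ) (ε : ℝ) (x : Fin n → ℕ → ℝ) : Prop :=
  (∀ i : Fin n, ∀ k ∈ Finset.Icc 1 (Kof w ε - 1), ¬ Heavy w ε (k + 1) i → 0 ≤ x i k) ∧
  (∀ i : Fin n,
      ∑ k ∈ (Finset.Icc 1 (Kof w ε - 1)).filter (fun k => ¬ Heavy w ε (k + 1) i),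
        x i k ≤ 1) ∧
  (∀ k ∈ Finset.Icc 1 (Kof w ε - 1),
      ∑ i ∈ Finset.univ.filter (fun i : Fin n => ¬ Heavy w ε (k + 1) i),
        w i * x i k ≤ bucketCap ε k)

/-- IP feasibility: LP feasibility together with integrality. -/
def IPfeasible (w : Fin n → ℝ) (ε : ℝ) (x : Fin n → ℕ → ℝ) : Prop :=
  LPfeasible w ε x ∧
    ∀ i : Fin n, ∀ k ∈ Finset.Icc 1 (Kof w ε - 1), ¬ Heavy w ε (k + 1) i →
      x i k = 0 ∨ x i k = 1

/-- Objective value `Σ_k Σ_{i ∈ L_{k+1}} q_{i,k} x_{i,k}` of an assignment vector. -/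
def assignProfit (T : ℕ) (w : Fin n → ℝ) (W : ℕ → ℝ) (p : Fin n → ℕ → ℝ) (ε : ℝ)
    (x : Fin n → ℕ → ℝ) : ℝ :=
  ∑ k ∈ Finset.Icc 1 (Kof w ε - 1),
    ∑ i ∈ Finset.univ.filter (fun i : Fin n => ¬ Heavy w ε (k + 1) i),
      qProfit T W p ε i k * x i k

/-- Residual capacities `W_t^{-G} = min_{t ≤ τ ≤ T} (W_τ − w(G_τ))`. -/
def resW (T : ℕ) (w : Fin n → ℝ) (W : ℕ → ℝ) (G : ℕ → Finset (Fin n)) (t : ℕ) : ℝ :=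
  if h : (Finset.Icc t T).Nonempty
  then (Finset.Icc t T).inf' h (fun τ => W τ - ∑ i ∈ G τ, w i)
  else 0

/-- Feasible chain for the residual instance `I^{-G}` (item set `N ∖ G_T`,
capacities `resW`). -/
def ResFeasibleChain (T : ℕ) (w : Fin n → ℝ) (W : ℕ → ℝ) (G : ℕ → Finset (Fin n))
    (R : ℕ → Finset (Fin n)) : Prop :=
  IsChainGIK T R ∧ (∀ t ∈ Finset.Icc 1 T, Disjoint (R t) (G T)) ∧
    ∀ t ∈ Finset.Icc 1 T, ∑ i ∈ R t, w i ≤ resW T w W G t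

/-- The instance restricted to item set `N'` is well-spaced with clusters `C 1, …, C M`. -/
def WellSpaced (w : Fin n → ℝ) (ε : ℝ) (N' : Finset (Fin n)) (M : ℕ)
    (C : ℕ → Finset (Fin n)) : Prop :=
  (N' = (Finset.Icc 1 M).biUnion C) ∧
  (∀ m₁ ∈ Finset.Icc 1 M, ∀ m₂ ∈ Finset.Icc 1 M, m₁ ≠ m₂ → Disjoint (C m₁) (C m₂)) ∧
  (∀ m ∈ Finset.Icc 1 M, ∀ i₁ ∈ C m, ∀ i₂ ∈ C m, w i₂ / w i₁ ≤ (n : ℝ) ^ ((1 : ℝ) / ε)) ∧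
  (∀ m₁ ∈ Finset.Icc 1 M, ∀ m₂ ∈ Finset.Icc 1 M, m₁ < m₂ →
    ∀ i₁ ∈ C m₁, ∀ i₂ ∈ C m₂,
      (n : ℝ) ^ (1 + ((m₂ - m₁ - 1 : ℕ) : ℝ) / ε) ≤ w i₂ / w i₁)

/-- `C_{[a,b]} = C_a ∪ ⋯ ∪ C_b`. -/
def clusterUnion (C : ℕ → Finset (Fin n)) (a b : ℕ) : Finset (Fin n) :=
  (Finset.Icc a b).biUnion C

/-- `cross_m(π)`: the number of items of `Q` in clusters `C_{m+1},…,C_M` that appear in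
`π` before the last item of `Q` belonging to `C_m` (zero when `Q ∩ C_m = ∅`). -/
def crossCount (M : ℕ) (C : ℕ → Finset (Fin n)) (Q : Finset (Fin n)) (π : Fin n → ℕ)
    (m : ℕ) : ℕ :=
  ((Q ∩ clusterUnion C (m + 1) M).filter (fun i => π i < (Q ∩ C m).sup π)).card

/-- `cross_{ℳ⁻,ℳ⁺}(π)`: the number of items of `Q` in `ℳ⁺`-indexed clusters appearing in
`π` before the last item of `Q` in `ℳ⁻`-indexed clusters. -/
def crossSets (C : ℕ → Finset (Fin n)) (Mm Mp : Finset ℕ) (Q : Finset (Fin n))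
    (π : Fin n → ℕ) : ℕ :=
  ((Q ∩ Mp.biUnion C).filter (fun i => π i < (Q ∩ Mm.biUnion C).sup π)).card

/-- A pair `(S, π)` is thin: `π` is a permutation of `S` and `cross_m(π) ≤ ⌈log₂ M⌉/ε`
for every `m`. -/
def ThinPair (M : ℕ) (C : ℕ → Finset (Fin n)) (ε : ℝ) (S : Finset (Fin n))
    (π : Fin n → ℕ) : Prop :=
  IsPerm S π ∧
    ∀ m ∈ Finset.Icc 1 M, (crossCount M C S π m : ℝ) ≤ (Nat.clog 2 M : ℝ) / ε

/-- Membership of `(S, π)` in `Thin(m, ψ, Q_{>m})`. -/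
def InThin (T : ℕ) (w : Fin n → ℝ) (W : ℕ → ℝ) (p : Fin n → ℕ → ℝ) (M : ℕ)
    (C : ℕ → Finset (Fin n)) (ε : ℝ) (m : ℕ) (ψ : ℝ) (Qm : Finset (Fin n))
    (S : Finset (Fin n)) (π : Fin n → ℕ) : Prop :=
  ThinPair M C ε S π ∧ S ⊆ clusterUnion C 1 m ∪ Qm ∧ Qm ⊆ S ∧
    ψ ≤ permProfit T w W p S π

end GIK

namespace GIK

/-- If the chain `S` consists of items of `G`, each entering exactly at time `u i` (where `T + 1`
stands for an item that never enters), then the profit of `S` is the sum over `G` of the profits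
at the entry times. -/
lemma chainProfit_eq_sum {n T : ℕ} (p : Fin n → ℕ → ℝ) (hpT1 : ∀ i, p i (T + 1) = 0)
    (S : ℕ → Finset (Fin n)) (G : Finset (Fin n)) (u : Fin n → ℕ)
    (hu1 : ∀ i, 1 ≤ u i) (huT : ∀ i, u i ≤ T + 1)
    (hS : ∀ t ≤ T, ∀ i, i ∈ S t ↔ u i ≤ t ∧ i ∈ G) :
    chainProfit T p S = ∑ i ∈ G, p i (u i) := by
  have h1 : ∀ t ∈ Finset.Icc 1 T,
      ∑ i ∈ S t \ S (t - 1), p i t = ∑ i ∈ G, if u i = t then p i t else 0 := by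
    intro t ht
    rw [Finset.mem_Icc] at ht
    rw [← Finset.sum_filter]
    refine Finset.sum_congr ?_ fun _ _ => rfl
    ext i
    rw [Finset.mem_sdiff, Finset.mem_filter, hS t ht.2, hS (t - 1) (by omega)]
    by_cases hG : i ∈ G <;> simp only [hG, and_true, and_false, true_and, false_and]
    omega
  rw [chainProfit, Finset.sum_congr rfl h1, Finset.sum_comm]
  refine Finset.sum_congr rfl fun i _ => ?_
  rw [Finset.sum_ite_eq]
  split_ifs with h
  · rfl
  · have h2 : u i = T + 1 := by
      have := hu1 i
      have := huT i
      rw [Finset.mem_Icc] at h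
      omega
    rw [h2, hpT1]

lemma IsChainGIK.mono {n T : ℕ} {S : ℕ → Finset (Fin n)} (hS : IsChainGIK T S) {s t : ℕ}
    (hst : s ≤ t) (ht : t ≤ T) : S s ⊆ S t := by
  induction t, hst using Nat.le_induction with
  | base => exact Finset.Subset.refl _
  | succ k _ ih => exact (ih (by omega)).trans (hS.2 k (by omega))

lemma one_le_insTime {n T : ℕ} (S : ℕ → Finset (Fin n)) (i : Fin n) : 1 ≤ insTime T S i := by
  unfold insTime
  split_ifs with h
  · exact (Finset.mem_Icc.1 (Finset.mem_filter.1 (Finset.min'_mem _ h)).1).1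
  · omega

lemma insTime_le {n T : ℕ} (S : ℕ → Finset (Fin n)) (i : Fin n) : insTime T S i ≤ T + 1 := by
  unfold insTime
  split_ifs with h
  · have := (Finset.mem_Icc.1 (Finset.mem_filter.1 (Finset.min'_mem _ h)).1).2
    omega
  · omega

lemma mem_iff_insTime_le {n T : ℕ} {S : ℕ → Finset (Fin n)} (hS : IsChainGIK T S)
    {t : ℕ} (ht : t ≤ T) (i : Fin n) : i ∈ S t ↔ insTime T S i ≤ t := by
  constructor
  · intro hi
    have ht1 : 1 ≤ t := by
      rcases Nat.eq_zero_or_pos t with rfl | h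
      · rw [hS.1] at hi
        exact absurd hi (Finset.notMem_empty i)
      · exact h
    have hm : t ∈ (Finset.Icc 1 T).filter (fun t => i ∈ S t) :=
      Finset.mem_filter.2 ⟨Finset.mem_Icc.2 ⟨ht1, ht⟩, hi⟩
    unfold insTime
    rw [dif_pos ⟨t, hm⟩]
    exact Finset.min'_le _ _ hm
  · intro h
    unfold insTime at h
    split_ifs at h with h'
    · exact hS.mono h ht (Finset.mem_filter.1 (Finset.min'_mem _ h')).2
    · omega

lemma le_itemProfit_insTime {n T : ℕ} (w : Fin n → ℝ) (W : ℕ → ℝ) (p : Fin n → ℕ → ℝ)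
    (hw : ∀ i, 0 < w i) (hpT1 : ∀ i, p i (T + 1) = 0)
    (S : ℕ → Finset (Fin n)) (hS : FeasibleChain T w W S) (π : Fin n → ℕ)
    (hord : ∀ i j : Fin n, insTime T S i < insTime T S j → π i < π j) (i : Fin n) :
    p i (insTime T S i) ≤ itemProfit T w W p Finset.univ π i := by
  refine Finset.le_max' _ _ ?_
  rcases (insTime_le (T := T) S i).lt_or_eq with h | h
  · have hT : insTime T S i ∈ Finset.Icc 1 T :=
      Finset.mem_Icc.2 ⟨one_le_insTime S i, by omega⟩
    refine Finset.mem_insert_of_mem (Finset.mem_image.2 ⟨_, Finset.mem_filter.2 ⟨hT, ?_⟩, rfl⟩)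
    refine le_trans ?_ (hS.2 _ hT)
    refine Finset.sum_le_sum_of_subset_of_nonneg ?_ fun j _ _ => (hw j).le
    intro j hj
    have hj := (Finset.mem_filter.1 hj).2
    rw [mem_iff_insTime_le hS.1 (by omega)]
    by_contra hlt
    have := hord i j (by omega)
    omega
  · rw [h, hpT1]
    exact Finset.mem_insert_self _ _

/-- The maximum defining `φ_π(i)` is attained at some period, `T + 1` included. -/
lemma exists_period {n T : ℕ} (w : Fin n → ℝ) (W : ℕ → ℝ) (p : Fin n → ℕ → ℝ)
    (hpT1 : ∀ i, p i (T + 1) = 0) (π : Fin n → ℕ) (i : Fin n) :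
    ∃ u, 1 ≤ u ∧ u ≤ T + 1 ∧ itemProfit T w W p Finset.univ π i = p i u ∧
      (u ≤ T → comp w Finset.univ π i ≤ W u) := by
  have h : itemProfit T w W p Finset.univ π i ∈ _ := Finset.max'_mem _ _
  rcases Finset.mem_insert.1 h with h | h
  · exact ⟨T + 1, by omega, le_rfl, by rw [h, hpT1], fun h => by omega⟩
  · obtain ⟨t, ht, hpt⟩ := Finset.mem_image.1 h
    obtain ⟨ht, hc⟩ := Finset.mem_filter.1 ht
    rw [Finset.mem_Icc] at ht
    exact ⟨t, ht.1, by omega, hpt.symm, fun _ => hc⟩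

/-- If each item `i` with `u i ≤ T` completes under `π` by capacity `W (u i)`, then inserting
every item at time `u i` gives a feasible chain. -/
lemma feasibleChain_of_completion {n T : ℕ} (w : Fin n → ℝ) (W : ℕ → ℝ)
    (hw : ∀ i, 0 < w i) (hW0 : ∀ t ∈ Finset.Icc 1 T, 0 ≤ W t)
    (hWmono : ∀ s ∈ Finset.Icc 1 T, ∀ t ∈ Finset.Icc 1 T, s ≤ t → W s ≤ W t)
    (π : Fin n → ℕ) (u : Fin n → ℕ) (hu1 : ∀ i, 1 ≤ u i)
    (hu : ∀ i, u i ≤ T → comp w Finset.univ π i ≤ W (u i)) :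
    FeasibleChain T w W (fun t => Finset.univ.filter (fun i => u i ≤ t)) := by
  refine ⟨⟨?_, ?_⟩, ?_⟩
  · refine Finset.filter_eq_empty_iff.2 fun i _ => ?_
    have := hu1 i
    omega
  · intro t _
    refine Finset.monotone_filter_right _ fun i _ h => ?_
    exact Nat.le_succ_of_le h
  · intro t ht
    have htT := (Finset.mem_Icc.1 ht).2
    rcases (Finset.univ.filter (fun i => u i ≤ t)).eq_empty_or_nonempty with he | hne
    · simp only [he, Finset.sum_empty]
      exact hW0 t ht
    · obtain ⟨i, hi, hmax⟩ := Finset.exists_max_image _ π hne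
      have hit := (Finset.mem_filter.1 hi).2
      have hi1 : u i ∈ Finset.Icc 1 T := Finset.mem_Icc.2 ⟨hu1 i, by omega⟩
      calc ∑ j ∈ Finset.univ.filter (fun i => u i ≤ t), w j
          ≤ comp w Finset.univ π i :=
            Finset.sum_le_sum_of_subset_of_nonneg
              (fun j hj => Finset.mem_filter.2 ⟨Finset.mem_univ _, hmax j hj⟩)
              fun j _ _ => (hw j).le
        _ ≤ W (u i) := hu i (by omega)
        _ ≤ W t := hWmono _ hi1 _ ht hit

end GIK

open GIK Finset in
theorem stmt13 {n T : ℕ} (w : Fin n → ℝ) (W : ℕ → ℝ) (p : Fin n → ℕ → ℝ)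
    (hw : ∀ i, 0 < w i) (hp : ∀ i t, 0 ≤ p i t)
    (hW0 : ∀ t ∈ Finset.Icc 1 T, 0 ≤ W t)
    (hWmono : ∀ s ∈ Finset.Icc 1 T, ∀ t ∈ Finset.Icc 1 T, s ≤ t → W s ≤ W t)
    (hpT1 : ∀ i, p i (T + 1) = 0)
    (S : ℕ → Finset (Fin n)) (hS : FeasibleChain T w W S)
    (hopt : ∀ S', FeasibleChain T w W S' → chainProfit T p S' ≤ chainProfit T p S)
    (π : Fin n → ℕ) (hπ : IsPerm Finset.univ π)
    (hord : ∀ i j : Fin n, insTime T S i < insTime T S j → π i < π j) :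
    (∀ i : Fin n, itemProfit T w W p Finset.univ π i = p i (insTime T S i)) ∧
    permProfit T w W p Finset.univ π = chainProfit T p S ∧
    ∀ G : Finset (Fin n),
      chainProfit T p (fun t => S t ∩ G) = ∑ i ∈ G, itemProfit T w W p Finset.univ π i := by
  choose u hu1 huT hup huc using exists_period (T := T) w W p hpT1 π
  have hchain : ∀ G : Finset (Fin n),
      chainProfit T p (fun t => S t ∩ G) = ∑ i ∈ G, p i (insTime T S i) := fun G =>
    chainProfit_eq_sum p hpT1 (fun t => S t ∩ G) G (insTime T S) (one_le_insTime S) (insTime_le S) fun t ht i => by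
      rw [Finset.mem_inter, mem_iff_insTime_le hS.1 ht]
  have hPhi : chainProfit T p S = ∑ i, p i (insTime T S i) := by
    simpa only [Finset.inter_univ] using hchain Finset.univ
  have hle := hopt _ (feasibleChain_of_completion w W hw hW0 hWmono π u hu1 huc)
  rw [hPhi, chainProfit_eq_sum p hpT1 _ Finset.univ u hu1 huT fun t _ i => by simp,
    ← Finset.sum_congr rfl fun i _ => hup i] at hle
  have hlow := le_itemProfit_insTime w W p hw hpT1 S hS π hord
  have hitem : ∀ i, itemProfit T w W p Finset.univ π i = p i (insTime T S i) := fun i =>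
    ((Finset.sum_eq_sum_iff_of_le fun i _ => hlow i).1
      (le_antisymm (Finset.sum_le_sum fun i _ => hlow i) hle) i (Finset.mem_univ i)).symm
  refine ⟨hitem, ?_, fun G => ?_⟩
  · rw [hPhi, permProfit]
    exact Finset.sum_congr rfl fun i _ => hitem i
  · rw [hchain]
    exact Finset.sum_congr rfl fun i _ => (hitem i).symm
end
end

section
/- For all real numbers A ≥ 0, B ≥ 0, α ∈ [0,1], and δ ∈ [0,1]: max{A + α·B, (1−δ)·B} ≥ ((1−δ)/(2−α))·(A + B). -/
theorem stmt14 (A B α δ : ℝ) (hA : 0 ≤ A) (hB : 0 ≤ B)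
    (hα : α ∈ Set.Icc (0 : ℝ) 1) (hδ : δ ∈ Set.Icc (0 : ℝ) 1) :
    (1 - δ) / (2 - α) * (A + B) ≤ max (A + α * B) ((1 - δ) * B) := by
  obtain ⟨hα0, hα1⟩ := hα
  obtain ⟨hδ0, hδ1⟩ := hδ
  have h1 := le_max_left (A + α * B) ((1 - δ) * B)
  have h2 := le_max_right (A + α * B) ((1 - δ) * B)
  set M := max (A + α * B) ((1 - δ) * B)
  have hM : 0 ≤ M := (mul_nonneg (sub_nonneg.2 hδ1) hB).trans h2
  rw [div_mul_eq_mul_div, div_le_iff₀ (by linarith)]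
  -- `(1 - δ)(A + B)` combines the two guarantees with weights `1 - δ` and `1 - α`,
  -- whose sum is at most `2 - α`.
  calc (1 - δ) * (A + B) = (1 - δ) * (A + α * B) + (1 - α) * ((1 - δ) * B) := by ring
    _ ≤ (1 - δ) * M + (1 - α) * M :=
        add_le_add (mul_le_mul_of_nonneg_left h1 (sub_nonneg.2 hδ1))
          (mul_le_mul_of_nonneg_left h2 (sub_nonneg.2 hα1))
    _ ≤ M * (2 - α) := by linarith [mul_nonneg hδ0 hM]
end

section
/- Let δ ∈ [0,1] and define the sequence α_0 = 0 and α_r = (1−δ)/(2−α_{r−1}) for every integer r ≥ 1. Then the recursion is well-defined (each α_r lies in [0,1], so 2−α_{r−1} > 0) and α_r ≥ r/(r+1) − r·δ for every integer r ≥ 0. -/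
/-!
The map `x ↦ (1 - δ) / (2 - x)` sends `[0, 1]` to itself, which gives the first claim. It is also
monotone there, so for the second claim it suffices to apply it to the lower bound
`b = r / (r + 1) - r * δ`. Writing `n = r + 1`, so that `2 - b = (n + 1) / n + (n - 1) * δ`,
the required inequality becomes, after clearing denominators,
`(n + 1) - (3 * n + 1) * δ - (n - 1) * n * (n + 1) * δ ^ 2 ≤ (n + 1) - (n + 1) * δ`.
-/

theorem stmt15 (δ : ℝ) (hδ : δ ∈ Set.Icc (0 : ℝ) 1) (a : ℕ → ℝ)
    (h0 : a 0 = 0) (hrec : ∀ r : ℕ, a (r + 1) = (1 - δ) / (2 - a r)) :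
    (∀ r : ℕ, a r ∈ Set.Icc (0 : ℝ) 1) ∧
    ∀ r : ℕ, (r : ℝ) / (r + 1) - r * δ ≤ a r := by
  obtain ⟨hd0, hd1⟩ := hδ
  have hmem : ∀ r : ℕ, a r ∈ Set.Icc (0 : ℝ) 1 := by
    intro r
    induction r with
    | zero => simp [h0]
    | succ r ih =>
      obtain ⟨_, h1⟩ := ih
      have hpos : 0 < 2 - a r := by linarith
      rw [hrec]
      exact ⟨div_nonneg (by linarith) hpos.le, (div_le_one hpos).2 (by linarith)⟩
  refine ⟨hmem, fun r => ?_⟩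
  induction r with
  | zero => simp [h0]
  | succ r ih =>
    have hpos : 0 < 2 - a r := by linarith [(hmem r).2]
    have hr : (0 : ℝ) ≤ r := Nat.cast_nonneg r
    rw [hrec]
    push_cast
    generalize (r : ℝ) = x at ih hr ⊢
    have hmono : (1 - δ) / (2 - (x / (x + 1) - x * δ)) ≤ (1 - δ) / (2 - a r) :=
      div_le_div_of_nonneg_left (by linarith) hpos (by linarith)
    refine le_trans ?_ hmono
    rw [le_div_iff₀ (by linarith)]
    -- The gap between the two sides, which is manifestly nonnegative.
    have key : (1 - δ) - ((x + 1) / (x + 1 + 1) - (x + 1) * δ) * (2 - (x / (x + 1) - x * δ))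
        = (2 * (x + 1) * δ + x * (x + 1) * (x + 2) * δ ^ 2) / (x + 2) := by
      have h1 : x + 1 ≠ 0 := by positivity
      have h2 : x + 2 ≠ 0 := by positivity
      have h3 : x + 1 + 1 ≠ 0 := by positivity
      field_simp
      ring
    have hgap : 0 ≤ (2 * (x + 1) * δ + x * (x + 1) * (x + 2) * δ ^ 2) / (x + 2) := by positivity
    linarith
end

section
/- Let ε ∈ (0,1) with 1/ε a positive integer, and let S* be a feasible chain for I = (N, W) maximizing Φ among all feasible chains. Then there exists a subset N' ⊆ N such that the instance (N', W) is well-spaced (for some clusters C_1,…,C_M partitioning N') and Φ(S*|_{N'}) ≥ (1−ε)·Φ(S*); in particular, the maximum profit of a feasible chain for (N', W) is at least (1−ε)·Φ(S*). -/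
/-!
Write `ε = 1 / k` and sort the items into the classes `e i = ⌊log_n w_i⌋`. Colour an item by the
residue of `e i` modulo `k`. Since the profit of a chain is additive over items, the `k` colours
share the profit of `S`, so some colour `r` carries at most an `ε` fraction of it
(`exists_cheap_colour`); removing all items of that colour costs at most `ε Φ(S)`. The surviving
items have `e i = r + k q + s` with `1 ≤ s ≤ k - 1`, and the clusters are the level sets of `q`.
Inside a cluster the values `log_n w_i` differ by less than `k`; between clusters the removed
class provides the gap `n^{1 + (q₂ - q₁ - 1) k}` (`wellSpaced_of_colour`). When `n ≤ 1` logarithms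
to base `n` are useless, but one cluster with every item works. Restricting a feasible chain
preserves feasibility, which gives the claim about the restricted instance.
-/

open Finset

noncomputable section
open scoped Classical

namespace GIK

/-- The restriction of a feasible chain to a set of items is feasible. -/
lemma feasible_inter {n T : ℕ} {w : Fin n → ℝ} {W : ℕ → ℝ} (hw : ∀ i, 0 < w i)
    {S : ℕ → Finset (Fin n)} (hS : FeasibleChain T w W S) (N' : Finset (Fin n)) :
    FeasibleChain T w W (fun t => S t ∩ N') := by
  obtain ⟨⟨h0, h1⟩, h2⟩ := hS
  refine ⟨⟨by simp [h0], fun t ht => Finset.inter_subset_inter_right (h1 t ht)⟩, fun t ht => ?_⟩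
  exact (Finset.sum_le_sum_of_subset_of_nonneg Finset.inter_subset_left
    (fun i _ _ => (hw i).le)).trans (h2 t ht)

/-- Averaging over colours: if the items are coloured with `k` colours, deleting a suitable
colour class costs at most a `1 / k` fraction of the profit of the chain. -/
lemma exists_cheap_colour {n T k : ℕ} (hk : 0 < k) (p : Fin n → ℕ → ℝ)
    (S : ℕ → Finset (Fin n)) (f : Fin n → ℕ) (hf : ∀ i, f i < k) :
    ∃ r < k, (1 - 1 / (k : ℝ)) * chainProfit T p S ≤
      chainProfit T p (fun t => S t ∩ Finset.univ.filter (fun i => f i ≠ r)) := by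
  set loss : ℕ → ℝ := fun r =>
    ∑ t ∈ Finset.Icc 1 T, ∑ i ∈ S t \ S (t - 1), if f i = r then p i t else 0 with hloss
  have hsum : ∑ r ∈ Finset.range k, loss r = chainProfit T p S := by
    simp only [hloss, chainProfit]
    rw [Finset.sum_comm]
    refine Finset.sum_congr rfl fun t _ => ?_
    rw [Finset.sum_comm]
    refine Finset.sum_congr rfl fun i _ => ?_
    rw [Finset.sum_ite_eq, if_pos (Finset.mem_range.2 (hf i))]
  have hk' : (0 : ℝ) < k := by exact_mod_cast hk
  obtain ⟨r, hr, hle⟩ : ∃ r ∈ Finset.range k, loss r ≤ 1 / (k : ℝ) * chainProfit T p S := by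
    apply Finset.exists_le_of_sum_le (Finset.nonempty_range_iff.2 hk.ne')
    rw [hsum, Finset.sum_const, Finset.card_range, nsmul_eq_mul]
    apply le_of_eq
    field_simp
  refine ⟨r, Finset.mem_range.1 hr, ?_⟩
  have hrest : chainProfit T p (fun t => S t ∩ Finset.univ.filter (fun i => f i ≠ r)) =
      chainProfit T p S - loss r := by
    simp only [hloss, chainProfit]
    rw [← Finset.sum_sub_distrib]
    refine Finset.sum_congr rfl fun t _ => ?_
    rw [← Finset.sum_sub_distrib]
    have : (S t ∩ Finset.univ.filter (fun i => f i ≠ r)) \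
        (S (t - 1) ∩ Finset.univ.filter (fun i => f i ≠ r)) =
        (S t \ S (t - 1)).filter (fun i => f i ≠ r) := by
      ext i
      simp only [Finset.mem_sdiff, Finset.mem_inter, Finset.mem_filter, Finset.mem_univ, true_and]
      tauto
    rw [this, Finset.sum_filter]
    refine Finset.sum_congr rfl fun i _ => ?_
    by_cases h : f i = r <;> simp [h]
  rw [hrest]
  linarith

/-- For `n ≥ 2`, deleting the items with `⌊log_n w_i⌋ ≡ r` modulo `k` leaves a well-spaced
instance for the parameter `ε` with `1 / ε = k`. -/
lemma wellSpaced_of_colour {n k r : ℕ} (hn : 2 ≤ n) (hk : 0 < k) (hr : r < k)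
    (w : Fin n → ℝ) (hw : ∀ i, 0 < w i) (ε : ℝ) (hε : 1 / ε = k) :
    ∃ (M : ℕ) (C : ℕ → Finset (Fin n)), WellSpaced w ε
      (Finset.univ.filter (fun i => (⌊Real.logb n (w i)⌋ % (k : ℤ)).toNat ≠ r)) M C := by
  set e : Fin n → ℤ := fun i => ⌊Real.logb n (w i)⌋ with he
  set q : Fin n → ℤ := fun i => (e i - r) / k with hq
  have hn1 : (1 : ℝ) < n := by exact_mod_cast hn
  have hn0 : (0 : ℝ) < n := by linarith
  have hkz : (0 : ℤ) < k := by exact_mod_cast hk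
  -- `e i - r = k q + s` with `s ≠ 0`, as the colour `r` has been removed
  have hdiv : ∀ i, (e i % (k : ℤ)).toNat ≠ r →
      e i - r ≥ k * q i + 1 ∧ e i - r ≤ k * q i + k - 1 := by
    intro i hi
    have h1 := Int.mul_ediv_add_emod (e i - r) k
    have h2 := Int.emod_nonneg (e i - r) hkz.ne'
    have h3 := Int.emod_lt_of_pos (e i - r) hkz
    have h4 : (e i - r) % (k : ℤ) ≠ 0 := by
      intro h
      apply hi
      have h5 : e i % (k : ℤ) = r % (k : ℤ) := Int.emod_eq_emod_iff_emod_sub_eq_zero.2 h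
      rw [h5, Int.emod_eq_of_lt (by positivity) (by exact_mod_cast hr)]
      simp
    simp only [hq]
    constructor <;> omega
  have hratio : ∀ i j, w j / w i = (n : ℝ) ^ (Real.logb n (w j) - Real.logb n (w i)) := by
    intro i j
    rw [Real.rpow_sub hn0, Real.rpow_logb hn0 hn1.ne' (hw j), Real.rpow_logb hn0 hn1.ne' (hw i)]
  have hlo : ∀ i, (e i : ℝ) ≤ Real.logb n (w i) := fun i => Int.floor_le _
  have hhi : ∀ i, Real.logb n (w i) < e i + 1 := fun i => Int.lt_floor_add_one _
  -- a bound on all `|q i|`, used to shift the cluster indices into `{1, …, M}`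
  set B : ℕ := ∑ i, (q i).natAbs with hB
  have hqB : ∀ i, (q i).natAbs ≤ B := fun i =>
    Finset.single_le_sum (f := fun i => (q i).natAbs) (fun _ _ => Nat.zero_le _)
      (Finset.mem_univ i)
  refine ⟨2 * B + 1, fun m => Finset.univ.filter
    (fun i => (e i % (k : ℤ)).toNat ≠ r ∧ q i + B + 1 = m), ?_, ?_, ?_, ?_⟩
  · ext i
    simp only [Finset.mem_filter, Finset.mem_univ, true_and, Finset.mem_biUnion, Finset.mem_Icc]
    constructor
    · intro h
      have := hqB i
      exact ⟨(q i + B + 1).toNat, by omega, h, by omega⟩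
    · rintro ⟨m, _, h, _⟩
      exact h
  · intro m₁ _ m₂ _ hne
    rw [Finset.disjoint_left]
    intro i h1 h2
    simp only [Finset.mem_filter, Finset.mem_univ, true_and] at h1 h2
    omega
  · intro m _ i hi j hj
    simp only [Finset.mem_filter, Finset.mem_univ, true_and] at hi hj
    have hqq : q i = q j := by omega
    have hi' := hdiv i hi.1
    have hj' := hdiv j hj.1
    rw [hqq] at hi'
    have hz : e j - e i + 1 ≤ k := by omega
    have hzr : (e j : ℝ) - e i + 1 ≤ k := by exact_mod_cast hz
    rw [hε, hratio]
    apply Real.rpow_le_rpow_of_exponent_le hn1.le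
    linarith [hlo i, hhi j]
  · intro m₁ _ m₂ _ hlt i hi j hj
    simp only [Finset.mem_filter, Finset.mem_univ, true_and] at hi hj
    have hqq : q j - q i - 1 = ((m₂ - m₁ - 1 : ℕ) : ℤ) := by omega
    have hi' := hdiv i hi.1
    have hj' := hdiv j hj.1
    have hz : 1 + ((m₂ - m₁ - 1 : ℕ) : ℤ) * k ≤ e j - e i - 1 := by
      rw [← hqq]
      nlinarith
    have hzr : 1 + ((m₂ - m₁ - 1 : ℕ) : ℝ) * k ≤ (e j : ℝ) - e i - 1 := by exact_mod_cast hz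
    rw [div_eq_mul_one_div, hε, hratio]
    apply Real.rpow_le_rpow_of_exponent_le hn1.le
    linarith [hlo j, hhi i]

/-- With at most one item, a single cluster with every item is well-spaced. -/
lemma wellSpaced_of_le_one {n : ℕ} (hn : n ≤ 1) (w : Fin n → ℝ) (hw : ∀ i, 0 < w i) (ε : ℝ) :
    WellSpaced w ε Finset.univ 1 (fun _ => Finset.univ) := by
  refine ⟨by simp, ?_, ?_, ?_⟩
  · intro m₁ h₁ m₂ h₂ hne
    simp only [Finset.mem_Icc] at h₁ h₂
    omega
  · intro m _ i _ j _
    have hn1 : n = 1 := by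
      have := i.isLt
      omega
    subst hn1
    rw [Subsingleton.elim j i, div_self (hw i).ne']
    simp
  · intro m₁ h₁ m₂ h₂ hlt
    simp only [Finset.mem_Icc] at h₁ h₂
    omega

end GIK

open GIK Finset in
theorem stmt16 {n T : ℕ} (w : Fin n → ℝ) (W : ℕ → ℝ) (p : Fin n → ℕ → ℝ)
    (hw : ∀ i, 0 < w i) (hp : ∀ i t, 0 ≤ p i t)
    (ε : ℝ) (hε : ε ∈ Set.Ioo (0 : ℝ) 1) (hεinv : ∃ m : ℕ, 0 < m ∧ ε = 1 / (m : ℝ))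
    (S : ℕ → Finset (Fin n)) (hS : FeasibleChain T w W S)
    (hopt : ∀ S', FeasibleChain T w W S' → chainProfit T p S' ≤ chainProfit T p S) :
    ∃ (N' : Finset (Fin n)) (M : ℕ) (C : ℕ → Finset (Fin n)),
      WellSpaced w ε N' M C ∧
      (1 - ε) * chainProfit T p S ≤ chainProfit T p (fun t => S t ∩ N') ∧
      ∃ S', FeasibleChain T w W S' ∧ (∀ t, S' t ⊆ N') ∧
        (1 - ε) * chainProfit T p S ≤ chainProfit T p S' := by
  obtain ⟨k, hk, rfl⟩ := hεinv
  suffices h : ∃ (N' : Finset (Fin n)) (M : ℕ) (C : ℕ → Finset (Fin n)),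
      WellSpaced w (1 / (k : ℝ)) N' M C ∧
      (1 - 1 / (k : ℝ)) * chainProfit T p S ≤ chainProfit T p (fun t => S t ∩ N') by
    obtain ⟨N', M, C, hC, hprofit⟩ := h
    exact ⟨N', M, C, hC, hprofit, fun t => S t ∩ N', feasible_inter hw hS N',
      fun t => Finset.inter_subset_right, hprofit⟩
  rcases le_or_gt n 1 with hn | hn
  · refine ⟨Finset.univ, 1, fun _ => Finset.univ, wellSpaced_of_le_one hn w hw _, ?_⟩
    have hnonneg : 0 ≤ chainProfit T p S :=
      Finset.sum_nonneg fun t _ => Finset.sum_nonneg fun i _ => hp i t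
    simp only [Finset.inter_univ]
    exact mul_le_of_le_one_left hnonneg (by linarith [hε.1])
  · have hkz : (0 : ℤ) < k := by exact_mod_cast hk
    obtain ⟨r, hr, hprofit⟩ := exists_cheap_colour (T := T) hk p S
      (fun i => (⌊Real.logb n (w i)⌋ % (k : ℤ)).toNat) (fun i => by
        have h1 := Int.emod_nonneg ⌊Real.logb n (w i)⌋ hkz.ne'
        have h2 := Int.emod_lt_of_pos ⌊Real.logb n (w i)⌋ hkz
        omega)
    obtain ⟨M, C, hC⟩ := wellSpaced_of_colour hn hk hr w hw (1 / (k : ℝ)) (one_div_one_div _)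
    exact ⟨_, M, C, hC, hprofit⟩
end
end

section
/- Let (N, W) be a well-spaced instance with clusters C_1,…,C_M, where ε ∈ (0,1), 1/ε is a positive integer, and min_{i∈N} w_i ≥ 3. Let π* : N → {1,…,n} be a bijection maximizing Ψ over all bijections of N. Then there exist a subset N_sparse ⊆ N and a bijection π_sparse : N_sparse → {1,…,|N_sparse|} such that cross_m(π_sparse) ≤ ⌈log₂ M⌉/ε for every m ∈ {1,…,M}, and Ψ(π_sparse) ≥ (1−ε)·Ψ(π*). -/
/-!
Discard a set `D` of items carrying at most an `ε`-fraction of the profit, and pull every surviving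
item forward to the slot of the first discarded item of a larger cluster, whenever that slot is
earlier than its own. A discarded item weighs at least `n` times each item moved into its slot, so
no completion time increases (`comp_move_le`), and the survivors keep their profit.

If `i` survives and still precedes an item of a smaller cluster `m`, then no discarded item of a
cluster above `m` comes before `i` in the original order (`no_earlier_discarded`). Hence it is
enough that `D` meets every quadrant `{i | m < cluster i, position i < s}` holding at least `1/ε`
items. Such a `D` is the least profitable class of a colouring with `1/ε` colours in which every
quadrant with at least `1/ε` items sees every colour (`exists_coloring`). In this way each
`cross_m` is less than `1/ε`; since `cross_m` is zero unless `M ≥ 2`, the bound `⌈log₂ M⌉/ε`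
follows.
-/



open Finset

noncomputable section
open scoped Classical

open GIK

/-! ### Polychromatic colouring of quadrants -/

/-- A colouring with `k` colours in which every quadrant sees at least `min k r` colours, where `r`
is its number of points. Points are added by decreasing label; the new point receives the colour
whose first appearance is latest, so it adds a new colour to every quadrant containing it that is
not yet fully coloured. -/
theorem exists_coloring_aux {n k : ℕ} (hk : 0 < k) (pos lab : Fin n → ℕ) (S : Finset (Fin n)) :
    ∃ c : Fin n → Fin k, ∀ m s : ℕ,
      min k (S.filter fun i => m < lab i ∧ pos i < s).card ≤
        ((S.filter fun i => m < lab i ∧ pos i < s).image c).card := by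
  have : Nonempty (Fin k) := ⟨⟨0, hk⟩⟩
  induction S using Finset.induction_on_min_value (f := lab) with
  | empty => exact ⟨fun _ => ⟨0, hk⟩, by simp⟩
  | insert a S haS hmin ih =>
    obtain ⟨c, hc⟩ := ih
    obtain ⟨b, hb⟩ := Finite.exists_max
      (fun b : Fin k => (S.filter fun i => c i = b).inf fun i => ((pos i : ℕ) : WithTop ℕ))
    have first_lt : ∀ (e : Fin k) (s : ℕ),
        ((S.filter fun i => c i = e).inf fun i => ((pos i : ℕ) : WithTop ℕ)) < (s : WithTop ℕ) ↔
          ∃ i ∈ S, c i = e ∧ pos i < s := by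
      intro e s
      rw [Finset.inf_lt_iff]
      simp [and_assoc]
    refine ⟨Function.update c a b, fun m s => ?_⟩
    have himg : ∀ R : Finset (Fin n), R ⊆ S → R.image (Function.update c a b) = R.image c := by
      intro R hR
      refine Finset.image_congr fun i hi => ?_
      have : i ≠ a := fun h => haS (h ▸ hR hi)
      simp [this]
    have hsub : (S.filter fun i => m < lab i ∧ pos i < s) ⊆ S := Finset.filter_subset _ _
    rw [Finset.filter_insert]
    split_ifs with ha
    · rw [Finset.image_insert, himg _ hsub, Function.update_self,
        Finset.card_insert_of_notMem (fun h => haS (hsub h))]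
      by_cases hbR : b ∈ (S.filter fun i => m < lab i ∧ pos i < s).image c
      · have hall : (S.filter fun i => m < lab i ∧ pos i < s).image c = Finset.univ := by
          refine Finset.eq_univ_iff_forall.2 fun e => ?_
          obtain ⟨i, hi, hib⟩ := Finset.mem_image.1 hbR
          obtain ⟨hiS, -, his⟩ := Finset.mem_filter.1 hi
          obtain ⟨j, hjS, hje, hjs⟩ :=
            (first_lt e s).1 ((hb e).trans_lt ((first_lt b s).2 ⟨i, hiS, hib, his⟩))
          exact Finset.mem_image.2
            ⟨j, Finset.mem_filter.2 ⟨hjS, ha.1.trans_le (hmin j hjS), hjs⟩, hje⟩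
        rw [hall, Finset.insert_eq_of_mem (Finset.mem_univ _), Finset.card_univ, Fintype.card_fin]
        exact min_le_left _ _
      · rw [Finset.card_insert_of_notMem hbR]
        have := hc m s
        omega
    · rw [himg _ hsub]
      exact hc m s

/-- Points can be coloured with `k` colours so that every quadrant with at least `k` points sees
every colour. -/
theorem exists_coloring {n k : ℕ} (hk : 0 < k) (pos lab : Fin n → ℕ) :
    ∃ c : Fin n → Fin k, ∀ m s : ℕ,
      k ≤ (Finset.univ.filter fun i => m < lab i ∧ pos i < s).card →
        ∀ e, ∃ i, c i = e ∧ m < lab i ∧ pos i < s := by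
  obtain ⟨c, hc⟩ := exists_coloring_aux hk pos lab Finset.univ
  refine ⟨c, fun m s hcard e => ?_⟩
  have h1 := hc m s
  rw [min_eq_left hcard] at h1
  have h2 : (Finset.univ.filter fun i => m < lab i ∧ pos i < s).image c = Finset.univ := by
    apply Finset.eq_univ_of_card
    rw [Fintype.card_fin]
    exact le_antisymm ((Finset.card_le_univ _).trans (by simp)) h1
  have h3 := Finset.mem_univ e
  rw [← h2] at h3
  obtain ⟨i, hi, hie⟩ := Finset.mem_image.1 h3
  exact ⟨i, hie, (Finset.mem_filter.1 hi).2⟩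

/-! ### Ranking items by a key -/

/-- Rank of `i` among the items of `Q` sorted by `key`. -/
def rankIn {n : ℕ} {α : Type} [LinearOrder α] (Q : Finset (Fin n)) (key : Fin n → α)
    (i : Fin n) : ℕ :=
  (Q.filter fun j => key j ≤ key i).card

theorem rankIn_lt {n : ℕ} {α : Type} [LinearOrder α] {Q : Finset (Fin n)} {key : Fin n → α}
    {i j : Fin n} (hj : j ∈ Q) (h : key i < key j) : rankIn Q key i < rankIn Q key j := by
  apply Finset.card_lt_card
  refine Finset.ssubset_iff_of_subset ?_ |>.2 ⟨j, by simp [hj], by simp [h]⟩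
  intro x hx
  simp only [Finset.mem_filter] at hx ⊢
  exact ⟨hx.1, hx.2.trans h.le⟩

theorem rankIn_lt_iff {n : ℕ} {α : Type} [LinearOrder α] {Q : Finset (Fin n)} {key : Fin n → α}
    {i j : Fin n} (hj : j ∈ Q) : rankIn Q key i < rankIn Q key j ↔ key i < key j := by
  refine ⟨fun h => ?_, rankIn_lt hj⟩
  by_contra! hle
  refine absurd h (not_lt.2 (Finset.card_le_card fun x hx => ?_))
  simp only [Finset.mem_filter] at hx ⊢
  exact ⟨hx.1, hx.2.trans hle⟩

theorem isPerm_rankIn {n : ℕ} {α : Type} [LinearOrder α] (Q : Finset (Fin n)) {key : Fin n → α}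
    (hkey : Function.Injective key) : IsPerm Q (rankIn Q key) := by
  have hmaps : Set.MapsTo (rankIn Q key) ↑Q ↑(Finset.Icc 1 Q.card) := by
    intro i hi
    rw [Finset.mem_coe, Finset.mem_Icc]
    exact ⟨Finset.card_pos.2 ⟨i, by simpa using hi⟩, Finset.card_le_card (Finset.filter_subset _ _)⟩
  have hinj : Set.InjOn (rankIn Q key) ↑Q := by
    intro i hi j hj hij
    rcases lt_trichotomy (key i) (key j) with h | h | h
    · exact absurd hij (rankIn_lt hj h).ne
    · exact hkey h
    · exact absurd hij (rankIn_lt hi h).ne'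
  exact ⟨hmaps, hinj, Finset.surjOn_of_injOn_of_card_le _ hmaps hinj (by simp)⟩

/-! ### Moving items to the slots of discarded items -/

/-- Slot of item `i` after discarding `D`: the earliest among its own position and the positions
of the discarded items with a larger label. -/
def slot {n : ℕ} (pos lab : Fin n → ℕ) (D : Finset (Fin n)) (i : Fin n) : ℕ :=
  (insert i (D.filter fun d => lab i < lab d)).inf' (Finset.insert_nonempty _ _) pos

theorem slot_le_pos {n : ℕ} (pos lab : Fin n → ℕ) (D : Finset (Fin n)) (i : Fin n) :
    slot pos lab D i ≤ pos i :=
  Finset.inf'_le _ (Finset.mem_insert_self _ _)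

theorem slot_le {n : ℕ} {pos lab : Fin n → ℕ} {D : Finset (Fin n)} {i d : Fin n} (hd : d ∈ D)
    (h : lab i < lab d) : slot pos lab D i ≤ pos d :=
  Finset.inf'_le _ (by simp [hd, h])

theorem slot_cases {n : ℕ} (pos lab : Fin n → ℕ) (D : Finset (Fin n)) (i : Fin n) :
    slot pos lab D i = pos i ∨ ∃ d ∈ D, lab i < lab d ∧ slot pos lab D i = pos d := by
  obtain ⟨d, hd, h⟩ := Finset.exists_mem_eq_inf' (Finset.insert_nonempty i
    (D.filter fun d => lab i < lab d)) pos
  rcases Finset.mem_insert.1 hd with rfl | hd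
  · exact Or.inl h
  · exact Or.inr ⟨d, (Finset.mem_filter.1 hd).1, (Finset.mem_filter.1 hd).2, h⟩

/-- Sorting key of the new order: items sharing a slot are arranged by increasing label, the
original position serving only to break ties. -/
def slotKey {n : ℕ} (pos lab : Fin n → ℕ) (D : Finset (Fin n)) (i : Fin n) : ℕ ×ₗ (ℕ ×ₗ ℕ) :=
  toLex (slot pos lab D i, toLex (lab i, pos i))

theorem slotKey_injective {n : ℕ} {pos : Fin n → ℕ} (hpos : Function.Injective pos)
    (lab : Fin n → ℕ) (D : Finset (Fin n)) : Function.Injective (slotKey pos lab D) := by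
  intro i j h
  have h1 := congrArg (fun x => (ofLex (ofLex x).2).2) h
  exact hpos h1

theorem slot_le_of_slotKey_le {n : ℕ} {pos lab : Fin n → ℕ} {D : Finset (Fin n)} {i j : Fin n}
    (h : slotKey pos lab D i ≤ slotKey pos lab D j) : slot pos lab D i ≤ slot pos lab D j := by
  rw [slotKey, slotKey, Prod.Lex.toLex_le_toLex] at h
  rcases h with h | h
  · exact h.le
  · exact h.1.le

theorem slot_lt_of_slotKey_lt {n : ℕ} {pos lab : Fin n → ℕ} {D : Finset (Fin n)} {i j : Fin n}
    (h : slotKey pos lab D i < slotKey pos lab D j) (hl : lab j < lab i) :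
    slot pos lab D i < slot pos lab D j := by
  rw [slotKey, slotKey, Prod.Lex.toLex_lt_toLex] at h
  rcases h with h | ⟨-, h⟩
  · exact h
  · rw [Prod.Lex.toLex_lt_toLex] at h
    simp only at h
    omega

/-- An item that crosses an item `j` of smaller label in the new order was not preceded by any
discarded item with label above that of `j`. -/
theorem no_earlier_discarded {n : ℕ} {pos lab : Fin n → ℕ} {D : Finset (Fin n)} {i j d : Fin n}
    (h : slotKey pos lab D i < slotKey pos lab D j) (hl : lab j < lab i)
    (hd : d ∈ D) (hjd : lab j < lab d) : pos i ≤ pos d := by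
  have h1 := slot_lt_of_slotKey_lt h hl
  have h2 : slot pos lab D j ≤ pos d := slot_le hd hjd
  rcases slot_cases pos lab D i with h3 | ⟨e, he, hie, h3⟩
  · omega
  · have : slot pos lab D j ≤ pos e := slot_le he (hl.trans hie)
    omega

/-- Completion times do not increase: the items overtaking `i` fit, by weight, into the discarded
items that were placed no later than `i`. -/
theorem comp_move_le {n : ℕ} {w : Fin n → ℝ} (hw : ∀ i, 0 < w i) {pos lab : Fin n → ℕ}
    (hlab : ∀ i j, lab i < lab j → (n : ℝ) * w i ≤ w j) (D : Finset (Fin n)) (i : Fin n) :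
    comp w Dᶜ (rankIn Dᶜ (slotKey pos lab D)) i ≤ comp w Finset.univ pos i := by
  have hn : (0 : ℝ) < n := by exact_mod_cast Fin.pos i
  have hlate : ∑ j ∈ Dᶜ.filter (fun j => slot pos lab D j ≤ pos i ∧ pos i < pos j), w j ≤
      ∑ d ∈ D.filter (fun d => pos d ≤ pos i), w d := by
    have hex : ∀ j, ∃ d, j ∈ Dᶜ.filter (fun j => slot pos lab D j ≤ pos i ∧ pos i < pos j) →
        d ∈ D.filter (fun d => pos d ≤ pos i) ∧ lab j < lab d := by
      intro j
      by_cases hj : j ∈ Dᶜ.filter (fun j => slot pos lab D j ≤ pos i ∧ pos i < pos j)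
      · obtain ⟨-, h1, h2⟩ := Finset.mem_filter.1 hj
        rcases slot_cases pos lab D j with h3 | ⟨d, hd, hjd, h3⟩
        · omega
        · exact ⟨d, fun _ => ⟨Finset.mem_filter.2 ⟨hd, h3 ▸ h1⟩, hjd⟩⟩
      · exact ⟨j, fun h => absurd h hj⟩
    choose g hg using hex
    rw [← Finset.sum_fiberwise_of_maps_to (fun j hj => (hg j hj).1)]
    refine Finset.sum_le_sum fun d _ => ?_
    have hcard : ((((Dᶜ.filter (fun j => slot pos lab D j ≤ pos i ∧ pos i < pos j)).filter
        fun j => g j = d).card : ℕ) : ℝ) ≤ n := by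
      exact_mod_cast (Finset.card_le_univ _).trans (by simp)
    calc _ ≤ ((Dᶜ.filter (fun j => slot pos lab D j ≤ pos i ∧ pos i < pos j)).filter
            fun j => g j = d).card • (w d / n) := by
          refine Finset.sum_le_card_nsmul _ _ _ fun j hj => ?_
          obtain ⟨hj1, rfl⟩ := Finset.mem_filter.1 hj
          rw [le_div_iff₀ hn, mul_comm]
          exact hlab _ _ (hg j hj1).2
      _ ≤ n * (w d / n) := by
          rw [nsmul_eq_mul]
          exact mul_le_mul_of_nonneg_right hcard (div_nonneg (hw d).le hn.le)
      _ = w d := by field_simp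
  have hsplit : comp w Finset.univ pos i = ∑ j ∈ Dᶜ.filter (fun j => pos j ≤ pos i), w j +
      ∑ d ∈ D.filter (fun d => pos d ≤ pos i), w d := by
    unfold comp
    rw [← Finset.sum_union]
    · refine Finset.sum_congr ?_ fun _ _ => rfl
      ext j
      simp only [Finset.mem_filter, Finset.mem_union, Finset.mem_compl, Finset.mem_univ]
      tauto
    · refine Finset.disjoint_left.2 fun j h1 h2 => ?_
      exact Finset.mem_compl.1 (Finset.mem_filter.1 h1).1 (Finset.mem_filter.1 h2).1
  rw [hsplit]
  refine le_trans ?_ (add_le_add le_rfl hlate)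
  unfold comp
  rw [← Finset.sum_union]
  · refine Finset.sum_le_sum_of_subset_of_nonneg (fun j hj => ?_) fun j _ _ => (hw j).le
    obtain ⟨hj1, hj2⟩ := Finset.mem_filter.1 hj
    have hle : slotKey pos lab D j ≤ slotKey pos lab D i := by
      by_contra! hlt
      exact absurd (rankIn_lt hj1 hlt) (not_lt.2 hj2)
    have hs := (slot_le_of_slotKey_le hle).trans (slot_le_pos pos lab D i)
    simp only [Finset.mem_union, Finset.mem_filter]
    rcases le_or_gt (pos j) (pos i) with h | h
    · exact Or.inl ⟨hj1, h⟩
    · exact Or.inr ⟨hj1, hs, h⟩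
  · refine Finset.disjoint_left.2 fun j h1 h2 => ?_
    have h3 := (Finset.mem_filter.1 h1).2
    have h4 := (Finset.mem_filter.1 h2).2.2
    omega

/-! ### Profits -/

theorem itemProfit_le_of_comp_le {n T : ℕ} {w : Fin n → ℝ} {W : ℕ → ℝ} {p : Fin n → ℕ → ℝ}
    {Q Q' : Finset (Fin n)} {π π' : Fin n → ℕ} {i : Fin n} (h : comp w Q' π' i ≤ comp w Q π i) :
    itemProfit T w W p Q π i ≤ itemProfit T w W p Q' π' i := by
  refine Finset.max'_subset _ (Finset.insert_subset_insert _ (Finset.image_subset_image ?_))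
  intro t ht
  obtain ⟨h1, h2⟩ := Finset.mem_filter.1 ht
  exact Finset.mem_filter.2 ⟨h1, h.trans h2⟩

/-- Some colour class carries at most a `1/k`-fraction of the total. -/
theorem exists_cheap_class {n k : ℕ} (hk : 0 < k) (c : Fin n → Fin k) (f : Fin n → ℝ) :
    ∃ e, (k : ℝ) * ∑ i ∈ Finset.univ.filter (fun i => c i = e), f i ≤ ∑ i, f i := by
  have : Nonempty (Fin k) := ⟨⟨0, hk⟩⟩
  obtain ⟨e, he⟩ := Finite.exists_min
    (fun e : Fin k => ∑ i ∈ Finset.univ.filter (fun i => c i = e), f i)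
  refine ⟨e, ?_⟩
  rw [← Finset.sum_fiberwise Finset.univ c f]
  have := Finset.card_nsmul_le_sum Finset.univ
    (fun e : Fin k => ∑ i ∈ Finset.univ.filter (fun i => c i = e), f i) _ (fun x _ => he x)
  simpa [nsmul_eq_mul] using this

open GIK Finset in
theorem stmt17 {n T : ℕ} (w : Fin n → ℝ) (W : ℕ → ℝ) (p : Fin n → ℕ → ℝ)
    (hw : ∀ i, 0 < w i) (hp : ∀ i t, 0 ≤ p i t)
    (hW0 : ∀ t ∈ Finset.Icc 1 T, 0 ≤ W t)
    (hWmono : ∀ s ∈ Finset.Icc 1 T, ∀ t ∈ Finset.Icc 1 T, s ≤ t → W s ≤ W t)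
    (ε : ℝ) (hε : ε ∈ Set.Ioo (0 : ℝ) 1) (hεinv : ∃ m : ℕ, 0 < m ∧ ε = 1 / (m : ℝ))
    (hwmin : ∀ i, 3 ≤ w i)
    (M : ℕ) (C : ℕ → Finset (Fin n))
    (hws : WellSpaced w ε Finset.univ M C)
    (πs : Fin n → ℕ) (hπs : IsPerm Finset.univ πs)
    (hopt : ∀ π' : Fin n → ℕ, IsPerm Finset.univ π' →
      permProfit T w W p Finset.univ π' ≤ permProfit T w W p Finset.univ πs) :
    ∃ (Ns : Finset (Fin n)) (πsp : Fin n → ℕ),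
      IsPerm Ns πsp ∧
      (∀ m ∈ Finset.Icc 1 M, (crossCount M C Ns πsp m : ℝ) ≤ (Nat.clog 2 M : ℝ) / ε) ∧
      (1 - ε) * permProfit T w W p Finset.univ πs ≤ permProfit T w W p Ns πsp := by
  obtain ⟨k, hk, rfl⟩ := hεinv
  obtain ⟨hcover, hdisj, -, hratio⟩ := hws
  have hcl : ∀ i, ∃ m ∈ Finset.Icc 1 M, i ∈ C m := by
    intro i
    have := Finset.mem_univ i
    rw [hcover] at this
    simpa only [Finset.mem_biUnion] using this
  choose lab hlabM hlabC using hcl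
  have lab_eq : ∀ {m i}, m ∈ Finset.Icc 1 M → i ∈ C m → lab i = m := by
    intro m i hm hi
    by_contra hne
    exact Finset.disjoint_left.1 (hdisj _ (hlabM i) m hm hne) (hlabC i) hi
  have hpos : Function.Injective πs := fun i j h => hπs.injOn (by simp) (by simp) h
  have hlab : ∀ i j, lab i < lab j → (n : ℝ) * w i ≤ w j := by
    intro i j hij
    have h1 := hratio _ (hlabM i) _ (hlabM j) hij i (hlabC i) j (hlabC j)
    have hn : (1 : ℝ) ≤ n := by exact_mod_cast Fin.pos i
    have h2 : (n : ℝ) ≤ (n : ℝ) ^ (1 + ((lab j - lab i - 1 : ℕ) : ℝ) / (1 / (k : ℝ))) := by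
      conv_lhs => rw [← Real.rpow_one (n : ℝ)]
      apply Real.rpow_le_rpow_of_exponent_le hn
      have : (0 : ℝ) ≤ ((lab j - lab i - 1 : ℕ) : ℝ) / (1 / (k : ℝ)) := by positivity
      linarith
    exact (le_div_iff₀ (hw i)).1 (h2.trans h1)
  obtain ⟨c, hc⟩ := exists_coloring hk πs lab
  obtain ⟨e, he⟩ := exists_cheap_class hk c (itemProfit T w W p Finset.univ πs)
  set D : Finset (Fin n) := Finset.univ.filter fun i => c i = e with hD
  refine ⟨Dᶜ, rankIn Dᶜ (slotKey πs lab D), isPerm_rankIn _ (slotKey_injective hpos lab D),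
    fun m hm => ?_, ?_⟩
  · set X : Finset (Fin n) := (Dᶜ ∩ clusterUnion C (m + 1) M).filter
      (fun i => rankIn Dᶜ (slotKey πs lab D) i <
        (Dᶜ ∩ C m).sup (rankIn Dᶜ (slotKey πs lab D))) with hX
    change (X.card : ℝ) ≤ _
    rcases X.eq_empty_or_nonempty with h0 | hne
    · rw [h0]
      simp only [Finset.card_empty, Nat.cast_zero]
      positivity
    have hXprop : ∀ i ∈ X, i ∉ D ∧ m < lab i ∧
        ∃ j, lab j = m ∧ slotKey πs lab D i < slotKey πs lab D j := by
      intro i hi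
      obtain ⟨hi1, hi2⟩ := Finset.mem_filter.1 hi
      obtain ⟨hiD, hiC⟩ := Finset.mem_inter.1 hi1
      obtain ⟨m', hm', him'⟩ := Finset.mem_biUnion.1 hiC
      rw [Finset.mem_Icc] at hm'
      have hl : lab i = m' := lab_eq (Finset.mem_Icc.2 ⟨by omega, hm'.2⟩) him'
      obtain ⟨j, hj, hij⟩ := Finset.lt_sup_iff.1 hi2
      obtain ⟨hjD, hjC⟩ := Finset.mem_inter.1 hj
      exact ⟨Finset.mem_compl.1 hiD, by omega, j, lab_eq hm hjC, (rankIn_lt_iff hjD).1 hij⟩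
    obtain ⟨i, hiX, himax⟩ := X.exists_max_image πs hne
    obtain ⟨hiD, hil, j, hjm, hij⟩ := hXprop i hiX
    have hlt : X.card < k := by
      by_contra! hge
      -- The quadrant ending at the last crossing item contains all of `X`, hence a discarded item.
      have hsub : X ⊆ Finset.univ.filter fun x => m < lab x ∧ πs x < πs i + 1 := by
        intro x hx
        exact Finset.mem_filter.2 ⟨Finset.mem_univ _, (hXprop x hx).2.1,
          Nat.lt_succ_of_le (himax x hx)⟩
      obtain ⟨d, hde, hdm, hdi⟩ := hc m (πs i + 1) (hge.trans (Finset.card_le_card hsub)) e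
      have hdD : d ∈ D := by simp [hD, hde]
      have h1 := no_earlier_discarded hij (by omega) hdD (by omega)
      exact hiD (hpos (show πs i = πs d by omega) ▸ hdD)
    have hM : 2 ≤ M := by
      have h1 := Finset.mem_Icc.1 (hlabM i)
      have h2 := Finset.mem_Icc.1 hm
      omega
    have hclog : (1 : ℝ) ≤ (Nat.clog 2 M : ℝ) := by
      exact_mod_cast Nat.clog_pos (by norm_num) hM
    have hXk : (X.card : ℝ) ≤ k := by exact_mod_cast hlt.le
    rw [div_div_eq_mul_div, div_one]
    exact hXk.trans (le_mul_of_one_le_left (Nat.cast_nonneg k) hclog)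
  · have hkR : (0 : ℝ) < k := by exact_mod_cast hk
    have h1 : ∑ i ∈ Dᶜ, itemProfit T w W p Finset.univ πs i ≤
        permProfit T w W p Dᶜ (rankIn Dᶜ (slotKey πs lab D)) :=
      Finset.sum_le_sum fun i _ => itemProfit_le_of_comp_le (comp_move_le hw hlab D i)
    have h2 := Finset.sum_add_sum_compl D (itemProfit T w W p Finset.univ πs)
    have h3 : ∑ i ∈ D, itemProfit T w W p Finset.univ πs i ≤
        1 / (k : ℝ) * ∑ i, itemProfit T w W p Finset.univ πs i := by
      rw [one_div, ← div_eq_inv_mul, le_div_iff₀ hkR, mul_comm]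
      exact he
    refine le_trans ?_ h1
    unfold permProfit
    linarith
end
end

section
/- Let m ∈ {1,…,M} and let (S, π) ∈ Thin(m, ψ_m, Q_{>m}). Define Q_{>m−1} = {i ∈ S∩(C_m ∪ Q_{>m}) : π(i) < max_{j ∈ S∩C_{[1,m−1]}} π(j)} (with Q_{>m−1} = ∅ when S∩C_{[1,m−1]} = ∅), ψ_{m−1} = max{0, ψ_m − Σ_{i ∈ S∖(C_{[1,m−1]} ∪ Q_{>m−1})} φ_π(i)}, and Ŝ = S∩(C_{[1,m−1]} ∪ Q_{>m−1}). Then: (i) Q_{>m−1} ⊆ C_{[m,M]} and |Q_{>m−1}| ≤ B; (ii) the items of Ŝ occupy the first |Ŝ| positions of π, i.e., π(i) < π(j) whenever i ∈ Ŝ and j ∈ S∖Ŝ; and (iii) the order-preserving restriction π̂ : Ŝ → {1,…,|Ŝ|} of π satisfies (Ŝ, π̂) ∈ Thin(m−1, ψ_{m−1}, Q_{>m−1}). -/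
/-!
Let `m' = m - 1`, let `A = S ∩ C_{[1,m']}` be the items of `S` in the lower clusters, and let
`σ` be the last position occupied by `A` under `π` (`0` if `A` is empty).

* Size of `Q_{>m'}`. If `A` is nonempty, `σ` is attained by an item of some cluster `C_k` with
  `k ≤ m'`. Every item of `Q_{>m'}` lies in a cluster above `k` and precedes that item, so it is
  counted by `cross_k(π)`, which is at most `B` by thinness (`card_crossing_le`).
* Prefix property. An item of `Ŝ` sits at a position at most `σ`. An item of `S` outside `Ŝ` lies
  in `C_m ∪ Q_{>m}` and at a position at least `σ`. Equality is excluded by injectivity of `π`.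
* Restriction. Since `Ŝ` occupies an initial segment of positions, `π` itself maps `Ŝ`
  bijectively onto `{1, …, |Ŝ|}` (`IsPerm.restrict_initial`), so it is its own order-preserving restriction.
  Crossing counts are monotone in the item set (`crossCount_mono`), which gives thinness.
  Completion times, hence profits, of items of `Ŝ` are the same in `Ŝ` and in `S`
  (`itemProfit_restrict`), so the profit of `Ŝ` is `Ψ(π)` minus the profit of `S ∖ Ŝ`.
-/

open Finset

noncomputable section
open scoped Classical

namespace GIK

variable {n : ℕ}

lemma mem_clusterUnion {C : ℕ → Finset (Fin n)} {a b : ℕ} {i : Fin n} :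
    i ∈ clusterUnion C a b ↔ ∃ k, (a ≤ k ∧ k ≤ b) ∧ i ∈ C k := by
  simp [clusterUnion]

lemma crossCount_mono {M : ℕ} {C : ℕ → Finset (Fin n)} {P S : Finset (Fin n)}
    (hPS : P ⊆ S) (π : Fin n → ℕ) (m : ℕ) :
    crossCount M C P π m ≤ crossCount M C S π m := by
  unfold crossCount
  apply Finset.card_le_card
  intro i hi
  simp only [Finset.mem_filter, Finset.mem_inter] at hi ⊢
  exact ⟨⟨hPS hi.1.1, hi.1.2⟩,
    hi.2.trans_le (Finset.sup_mono (Finset.inter_subset_inter_right hPS))⟩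

/-- A permutation of `S`, restricted to a set `P` that precedes the rest of `S`, is a permutation
of `P`: the image of `P` is downward closed in `{1, …, |S|}` and has `|P|` elements. -/
lemma IsPerm.restrict_initial {S P : Finset (Fin n)} {π : Fin n → ℕ} (hπ : IsPerm S π) (hPS : P ⊆ S)
    (hpre : ∀ i ∈ P, ∀ j ∈ S \ P, π i < π j) : IsPerm P π := by
  have hinj : Set.InjOn π ↑P := hπ.injOn.mono (by exact_mod_cast hPS)
  have hcard : (P.image π).card = P.card := Finset.card_image_of_injOn hinj
  have hsub : P.image π ⊆ Finset.Icc 1 P.card := by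
    intro x hx
    obtain ⟨i, hi, rfl⟩ := Finset.mem_image.mp hx
    have hiS : π i ∈ Finset.Icc 1 S.card := by exact_mod_cast hπ.mapsTo (hPS hi)
    rw [Finset.mem_Icc] at hiS ⊢
    refine ⟨hiS.1, ?_⟩
    have hlow : Finset.Icc 1 (π i) ⊆ P.image π := by
      intro y hy
      rw [Finset.mem_Icc] at hy
      obtain ⟨j, hj, rfl⟩ := hπ.surjOn
        (show y ∈ (↑(Finset.Icc 1 S.card) : Set ℕ) by
          rw [Finset.mem_coe, Finset.mem_Icc]; omega)
      refine Finset.mem_image_of_mem π ?_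
      by_contra hjP
      have := hpre i hi j (Finset.mem_sdiff.mpr ⟨hj, hjP⟩)
      omega
    have := Finset.card_le_card hlow
    rw [hcard, Nat.card_Icc] at this
    omega
  have himg : P.image π = Finset.Icc 1 P.card :=
    Finset.eq_of_subset_of_card_le hsub (by rw [hcard, Nat.card_Icc]; omega)
  unfold IsPerm
  rw [← himg, Finset.coe_image]
  exact hinj.bijOn_image

/-- Completion times depend only on preceding items, so deleting the items that follow a prefix
does not change the profits within it. -/
lemma itemProfit_restrict {T : ℕ} {w : Fin n → ℝ} {W : ℕ → ℝ} {p : Fin n → ℕ → ℝ}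
    {S P : Finset (Fin n)} {π : Fin n → ℕ} (hPS : P ⊆ S)
    (hpre : ∀ i ∈ P, ∀ j ∈ S \ P, π i < π j) {i : Fin n} (hi : i ∈ P) :
    itemProfit T w W p P π i = itemProfit T w W p S π i := by
  have hc : GIK.comp w P π i = GIK.comp w S π i := by
    unfold GIK.comp
    congr 1
    ext j
    simp only [Finset.mem_filter]
    refine ⟨fun h => ⟨hPS h.1, h.2⟩, fun h => ⟨?_, h.2⟩⟩
    by_contra hjP
    have := hpre i hi j (Finset.mem_sdiff.mpr ⟨h.1, hjP⟩)
    omega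
  unfold itemProfit
  simp only [hc]

lemma itemProfit_nonneg (T : ℕ) (w : Fin n → ℝ) (W : ℕ → ℝ) (p : Fin n → ℕ → ℝ)
    (S : Finset (Fin n)) (π : Fin n → ℕ) (i : Fin n) : 0 ≤ itemProfit T w W p S π i :=
  Finset.le_max' _ _ (Finset.mem_insert_self _ _)

/-- In a thin pair, at most `B` items of the clusters `C_m, …, C_M` precede the last item of the
clusters `C_1, …, C_{m-1}`: they all cross the single cluster containing that last item. -/
lemma card_crossing_le {M m : ℕ} {C : ℕ → Finset (Fin n)} {ε : ℝ} (hε : 0 < ε)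
    (hm : m ∈ Finset.Icc 1 M) {S R : Finset (Fin n)} {π : Fin n → ℕ}
    (hthin : ThinPair M C ε S π) (hRS : R ⊆ S) (hR : R ⊆ clusterUnion C m M)
    (hlt : ∀ i ∈ R, π i < (S ∩ clusterUnion C 1 (m - 1)).sup π) :
    (R.card : ℝ) ≤ (Nat.clog 2 M : ℝ) / ε := by
  rw [Finset.mem_Icc] at hm
  rcases (S ∩ clusterUnion C 1 (m - 1)).eq_empty_or_nonempty with hA | hA
  · have hRe : R = ∅ := Finset.eq_empty_of_forall_notMem fun i hi => by
      simpa [hA] using hlt i hi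
    rw [hRe, Finset.card_empty, Nat.cast_zero]
    positivity
  · obtain ⟨a, ha, hsup⟩ := Finset.exists_mem_eq_sup _ hA π
    obtain ⟨haS, haC⟩ := Finset.mem_inter.mp ha
    obtain ⟨k, hk, hak⟩ := mem_clusterUnion.mp haC
    refine le_trans ?_ (hthin.2 k (by rw [Finset.mem_Icc]; omega))
    unfold crossCount
    rw [Nat.cast_le]
    apply Finset.card_le_card
    intro i hi
    obtain ⟨l, hl, hil⟩ := mem_clusterUnion.mp (hR hi)
    rw [Finset.mem_filter, Finset.mem_inter]
    refine ⟨⟨hRS hi, mem_clusterUnion.mpr ⟨l, by omega, hil⟩⟩, ?_⟩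
    have h1 := hlt i hi
    rw [hsup] at h1
    exact h1.trans_le (Finset.le_sup (f := π) (Finset.mem_inter.mpr ⟨haS, hak⟩))

end GIK

open GIK Finset in
theorem stmt19 {n T : ℕ} (w : Fin n → ℝ) (W : ℕ → ℝ) (p : Fin n → ℕ → ℝ)
    (hw : ∀ i, 0 < w i) (hp : ∀ i t, 0 ≤ p i t)
    (hW0 : ∀ t ∈ Finset.Icc 1 T, 0 ≤ W t)
    (hWmono : ∀ s ∈ Finset.Icc 1 T, ∀ t ∈ Finset.Icc 1 T, s ≤ t → W s ≤ W t)
    (M : ℕ) (C : ℕ → Finset (Fin n))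
    (hpart : (Finset.univ : Finset (Fin n)) = (Finset.Icc 1 M).biUnion C)
    (hdisjC : ∀ m₁ ∈ Finset.Icc 1 M, ∀ m₂ ∈ Finset.Icc 1 M, m₁ ≠ m₂ →
      Disjoint (C m₁) (C m₂))
    (ε : ℝ) (hε : ε ∈ Set.Ioo (0 : ℝ) 1)
    (m : ℕ) (hm : m ∈ Finset.Icc 1 M) (ψm : ℝ) (hψm : 0 ≤ ψm)
    (Qm : Finset (Fin n)) (hQmsub : Qm ⊆ clusterUnion C (m + 1) M)
    (hQmcard : (Qm.card : ℝ) ≤ (Nat.clog 2 M : ℝ) / ε)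
    (S : Finset (Fin n)) (π : Fin n → ℕ)
    (hthin : InThin T w W p M C ε m ψm Qm S π) :
    let Qprev : Finset (Fin n) :=
      (S ∩ (C m ∪ Qm)).filter (fun i => π i < (S ∩ clusterUnion C 1 (m - 1)).sup π)
    let ψprev : ℝ :=
      max 0 (ψm - ∑ i ∈ S \ (clusterUnion C 1 (m - 1) ∪ Qprev), itemProfit T w W p S π i)
    let Shat : Finset (Fin n) := S ∩ (clusterUnion C 1 (m - 1) ∪ Qprev)
    (Qprev ⊆ clusterUnion C m M ∧ (Qprev.card : ℝ) ≤ (Nat.clog 2 M : ℝ) / ε) ∧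
    (∀ i ∈ Shat, ∀ j ∈ S \ Shat, π i < π j) ∧
    ∃ πh : Fin n → ℕ, IsPerm Shat πh ∧
      (∀ i ∈ Shat, ∀ j ∈ Shat, (πh i < πh j ↔ π i < π j)) ∧
      InThin T w W p M C ε (m - 1) ψprev Qprev Shat πh := by
  intro Qprev ψprev Shat
  obtain ⟨hthinS, hScov, -, hprofit⟩ := hthin
  have hm1 := Finset.mem_Icc.mp hm
  have hQS : Qprev ⊆ S := fun i hi => (Finset.mem_inter.mp (Finset.mem_filter.mp hi).1).1
  have hQcl : Qprev ⊆ clusterUnion C m M := by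
    intro i hi
    rcases Finset.mem_union.mp (Finset.mem_inter.mp (Finset.mem_filter.mp hi).1).2 with h | h
    · exact mem_clusterUnion.mpr ⟨m, by omega, h⟩
    · obtain ⟨k, hk, hik⟩ := mem_clusterUnion.mp (hQmsub h)
      exact mem_clusterUnion.mpr ⟨k, by omega, hik⟩
  have hQcard := card_crossing_le hε.1 hm hthinS hQS hQcl
    (fun i hi => (Finset.mem_filter.mp hi).2)
  have hPS : Shat ⊆ S := Finset.inter_subset_left
  have hle : ∀ i ∈ Shat, π i ≤ (S ∩ clusterUnion C 1 (m - 1)).sup π := by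
    intro i hi
    obtain ⟨hiS, hi⟩ := Finset.mem_inter.mp hi
    rcases Finset.mem_union.mp hi with h | h
    · exact Finset.le_sup (f := π) (Finset.mem_inter.mpr ⟨hiS, h⟩)
    · exact (Finset.mem_filter.mp h).2.le
  have hge : ∀ j ∈ S \ Shat, (S ∩ clusterUnion C 1 (m - 1)).sup π ≤ π j := by
    intro j hj
    obtain ⟨hjS, hjn⟩ := Finset.mem_sdiff.mp hj
    by_contra hlt
    refine hjn (Finset.mem_inter.mpr ⟨hjS, ?_⟩)
    by_cases hjc : j ∈ clusterUnion C 1 (m - 1)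
    · exact Finset.mem_union_left _ hjc
    · refine Finset.mem_union_right _ (Finset.mem_filter.mpr
        ⟨Finset.mem_inter.mpr ⟨hjS, Finset.mem_union.mpr ?_⟩, not_le.mp hlt⟩)
      rcases Finset.mem_union.mp (hScov hjS) with h | h
      · obtain ⟨k, hk, hjk⟩ := mem_clusterUnion.mp h
        have hkm : k = m := by
          by_contra hne
          exact hjc (mem_clusterUnion.mpr ⟨k, by omega, hjk⟩)
        exact Or.inl (hkm ▸ hjk)
      · exact Or.inr h
  have hpre : ∀ i ∈ Shat, ∀ j ∈ S \ Shat, π i < π j := by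
    intro i hi j hj
    refine lt_of_le_of_ne ((hle i hi).trans (hge j hj)) fun heq => ?_
    have hij : i = j := hthinS.1.injOn (hPS hi) (Finset.mem_sdiff.mp hj).1 heq
    exact (Finset.mem_sdiff.mp hj).2 (hij ▸ hi)
  have hperm : IsPerm Shat π := hthinS.1.restrict_initial hPS hpre
  refine ⟨⟨hQcl, hQcard⟩, hpre, π, hperm, fun _ _ _ _ => Iff.rfl, ⟨hperm, fun k hk => ?_⟩,
    Finset.inter_subset_right,
    fun i hi => Finset.mem_inter.mpr ⟨hQS hi, Finset.mem_union_right _ hi⟩, ?_⟩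
  · exact le_trans (by exact_mod_cast crossCount_mono hPS π k) (hthinS.2 k hk)
  · have hrestr : permProfit T w W p Shat π = ∑ i ∈ Shat, itemProfit T w W p S π i :=
      Finset.sum_congr rfl fun i hi => itemProfit_restrict hPS hpre hi
    have hsplit : ∑ i ∈ S \ (clusterUnion C 1 (m - 1) ∪ Qprev), itemProfit T w W p S π i
        + ∑ i ∈ Shat, itemProfit T w W p S π i = permProfit T w W p S π := by
      rw [← Finset.sdiff_inter_self_left]
      exact Finset.sum_sdiff hPS
    rw [hrestr]
    refine max_le (Finset.sum_nonneg fun i _ => itemProfit_nonneg T w W p S π i) ?_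
    linarith
end
end
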